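/- Define X_t := ∑_{j=1}^{t} j^{−5/3} · exp(−∑_{k=j+1}^t 1/k) for integers t ≥ 1. Then for every integer T ≥ 1, ∑_{t=1}^T X_t^{1/2} ≤ (3/2)·(7·2^{2/3})^{1/2} · T^{2/3}. -/

import Mathlib

/-- `X t := ∑_{j=1}^{t} j^{−5/3} · exp(−∑_{k=j+1}^t 1/k)`. -/
noncomputable def X (t : ℕ) : ℝ :=
  ∑ j ∈ Finset.Icc 1 t,
    (j : ℝ) ^ (-(5/3) : ℝ) * Real.exp (-∑ k ∈ Finset.Icc (j + 1) t, (1 : ℝ) / k)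

/-!
The product of the factors `1 + 1/k ≤ exp (1/k)` over `j < k ≤ t` telescopes, so the discount factor
`exp (-∑ k ∈ Icc (j + 1) t, 1/k)` is at most `(j + 1) / (t + 1)`. Bounding `j + 1` by `2 * j` leaves
a sum of powers `j ^ (-(2/3))`, which is at most `3 * t ^ (1/3)`; hence `X t ≤ 6 * t ^ (-(2/3))`.
Taking square roots gives a second sum of powers, now of `t ^ (-(1/3))`, which is estimated in the
same way. The resulting constant `(3/2) * √6` is smaller than the one claimed.
-/

open Finset Real

section PowerSums

theorem rpow_le_rpow_add_mul_sub {s x y : ℝ} (hs₀ : 0 ≤ s) (hs₁ : s ≤ 1) (hx : 0 < x)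
    (hy : 0 ≤ y) : y ^ s ≤ x ^ s + s * x ^ (s - 1) * (y - x) := by
  have bernoulli : (1 + (y / x - 1)) ^ s ≤ 1 + s * (y / x - 1) :=
    rpow_one_add_le_one_add_mul_self (by linarith [div_nonneg hy hx.le]) hs₀ hs₁
  rw [add_sub_cancel, div_rpow hy hx.le, div_le_iff₀ (by positivity)] at bernoulli
  calc y ^ s ≤ (1 + s * (y / x - 1)) * x ^ s := bernoulli
    _ = x ^ s + s * x ^ (s - 1) * (y - x) := by
      rw [rpow_sub_one hx.ne']
      field_simp

theorem sum_Icc_rpow_neg_le {p : ℝ} (hp₀ : 0 ≤ p) (hp₁ : p < 1) (n : ℕ) :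
    ∑ j ∈ Icc 1 n, (j : ℝ) ^ (-p) ≤ (n : ℝ) ^ (1 - p) / (1 - p) := by
  have hs : 0 < 1 - p := sub_pos.2 hp₁
  induction n with
  | zero => simp [zero_rpow hs.ne']
  | succ n ih =>
    have tangent :
        (n : ℝ) ^ (1 - p) ≤ ((n : ℝ) + 1) ^ (1 - p) - (1 - p) * ((n : ℝ) + 1) ^ (-p) := by
      convert rpow_le_rpow_add_mul_sub hs.le (by linarith) n.cast_add_one_pos n.cast_nonneg using 1
      ring_nf
    rw [le_div_iff₀ hs] at ih ⊢
    rw [sum_Icc_succ_top (Nat.le_add_left 1 n), Nat.cast_add_one]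
    linarith

end PowerSums

section DiscountedSums

/-- The weights `a 1, …, a t` summed with the discount factors `exp (-∑ k ∈ Icc (j + 1) t, 1 / k)`,
that is, the value at time `t` of the sequence that starts at `0` and at each time `k` is multiplied
by `exp (-1 / k)` and then increased by `a k`. It abstracts `X` from its weights. -/
noncomputable def harmonicDiscountedSum (a : ℕ → ℝ) (t : ℕ) : ℝ :=
  ∑ j ∈ Icc 1 t, a j * exp (-∑ k ∈ Icc (j + 1) t, (1 : ℝ) / k)

theorem X_eq_harmonicDiscountedSum (t : ℕ) :
    X t = harmonicDiscountedSum (fun j ↦ (j : ℝ) ^ (-(5/3) : ℝ)) t :=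
  rfl

theorem prod_Icc_one_add_one_div {j t : ℕ} (hjt : j ≤ t) :
    ∏ k ∈ Icc (j + 1) t, (1 + (1 : ℝ) / k) = (t + 1) / (j + 1) := by
  induction t, hjt using Nat.le_induction with
  | base => simp [div_self (Nat.cast_add_one_pos (α := ℝ) j).ne']
  | succ t hjt ih =>
    rw [prod_Icc_succ_top (by lia), ih]
    push_cast
    field_simp

theorem exp_neg_sum_Icc_one_div_le {j t : ℕ} (hjt : j ≤ t) :
    exp (-∑ k ∈ Icc (j + 1) t, (1 : ℝ) / k) ≤ (j + 1) / (t + 1) := by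
  have hprod := prod_one_add_le_exp_sum (Icc (j + 1) t) (f := fun k ↦ (1 : ℝ) / k)
    fun k ↦ by positivity
  rw [prod_Icc_one_add_one_div hjt] at hprod
  rw [exp_neg, ← inv_div]
  gcongr

variable {a : ℕ → ℝ}

theorem harmonicDiscountedSum_nonneg (ha : ∀ j, 0 ≤ a j) (t : ℕ) :
    0 ≤ harmonicDiscountedSum a t :=
  sum_nonneg fun j _ ↦ mul_nonneg (ha j) (exp_nonneg _)

theorem harmonicDiscountedSum_le (ha : ∀ j, 0 ≤ a j) (t : ℕ) :
    harmonicDiscountedSum a t ≤ (∑ j ∈ Icc 1 t, a j * (j + 1)) / (t + 1) := by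
  rw [sum_div]
  refine sum_le_sum fun j hj ↦ ?_
  rw [mul_div_assoc]
  exact mul_le_mul_of_nonneg_left (exp_neg_sum_Icc_one_div_le (mem_Icc.1 hj).2) (ha j)

theorem rpow_neg_mul_add_one_le {p x : ℝ} (hx : 1 ≤ x) :
    x ^ (-p) * (x + 1) ≤ 2 * x ^ (-(p - 1)) := by
  have hx₀ : x ≠ 0 := by positivity
  calc x ^ (-p) * (x + 1) ≤ x ^ (-p) * (2 * x) := by gcongr; linarith
    _ = 2 * x ^ (-(p - 1)) := by
      rw [neg_sub', sub_neg_eq_add, rpow_add_one hx₀]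
      ring

theorem harmonicDiscountedSum_rpow_neg_le {p : ℝ} (hp₁ : 1 ≤ p) (hp₂ : p < 2) (t : ℕ) :
    harmonicDiscountedSum (fun j ↦ (j : ℝ) ^ (-p)) t ≤ 2 / (2 - p) * (t : ℝ) ^ (-(p - 1)) := by
  have const_nonneg : 0 ≤ 2 / (2 - p) := div_nonneg zero_le_two (sub_pos.2 hp₂).le
  have rpow_le : (t : ℝ) ^ (1 - (p - 1)) ≤ (t : ℝ) ^ (-(p - 1)) * (t + 1) := by
    rw [sub_eq_neg_add, rpow_add_one' t.cast_nonneg (by linarith)]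
    gcongr
    linarith
  calc harmonicDiscountedSum (fun j ↦ (j : ℝ) ^ (-p)) t
      ≤ (∑ j ∈ Icc 1 t, (j : ℝ) ^ (-p) * (j + 1)) / (t + 1) :=
        harmonicDiscountedSum_le (fun j ↦ by positivity) t
    _ ≤ (2 * ∑ j ∈ Icc 1 t, (j : ℝ) ^ (-(p - 1))) / (t + 1) := by
        rw [mul_sum]
        gcongr ?_ / _
        exact sum_le_sum fun j hj ↦
          rpow_neg_mul_add_one_le (p := p) (Nat.one_le_cast.2 (mem_Icc.1 hj).1)
    _ ≤ (2 * ((t : ℝ) ^ (1 - (p - 1)) / (1 - (p - 1)))) / (t + 1) := by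
        gcongr
        exact sum_Icc_rpow_neg_le (by linarith) (by linarith) t
    _ = 2 / (2 - p) * ((t : ℝ) ^ (1 - (p - 1)) / (t + 1)) := by
        rw [show 1 - (p - 1) = 2 - p by ring]
        ring
    _ ≤ 2 / (2 - p) * (t : ℝ) ^ (-(p - 1)) :=
        mul_le_mul_of_nonneg_left ((div_le_iff₀ (by positivity)).2 rpow_le) const_nonneg

end DiscountedSums

theorem stmt_6_general {p q : ℝ} (hp₁ : 1 ≤ p) (hp₂ : p < 2) (hq : 0 ≤ q) (hpq : (p - 1) * q < 1)
    (T : ℕ) :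
    ∑ t ∈ Icc 1 T, harmonicDiscountedSum (fun j ↦ (j : ℝ) ^ (-p)) t ^ q ≤
      1 / (1 - (p - 1) * q) * (2 / (2 - p)) ^ q * (T : ℝ) ^ (1 - (p - 1) * q) := by
  have const_nonneg : 0 ≤ 2 / (2 - p) := div_nonneg zero_le_two (sub_pos.2 hp₂).le
  calc ∑ t ∈ Icc 1 T, harmonicDiscountedSum (fun j ↦ (j : ℝ) ^ (-p)) t ^ q
      ≤ ∑ t ∈ Icc 1 T, (2 / (2 - p) * (t : ℝ) ^ (-(p - 1))) ^ q := by
        gcongr with t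
        · exact harmonicDiscountedSum_nonneg (fun j ↦ by positivity) t
        · exact harmonicDiscountedSum_rpow_neg_le hp₁ hp₂ t
    _ = (2 / (2 - p)) ^ q * ∑ t ∈ Icc 1 T, (t : ℝ) ^ (-((p - 1) * q)) := by
        rw [mul_sum]
        refine sum_congr rfl fun t _ ↦ ?_
        rw [mul_rpow const_nonneg (by positivity), ← rpow_mul t.cast_nonneg, neg_mul]
    _ ≤ (2 / (2 - p)) ^ q * ((T : ℝ) ^ (1 - (p - 1) * q) / (1 - (p - 1) * q)) := by
        have sum_le := sum_Icc_rpow_neg_le (mul_nonneg (sub_nonneg.2 hp₁) hq) hpq T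
        exact mul_le_mul_of_nonneg_left sum_le (rpow_nonneg const_nonneg q)
    _ = 1 / (1 - (p - 1) * q) * (2 / (2 - p)) ^ q * (T : ℝ) ^ (1 - (p - 1) * q) := by ring

/-- For every integer `T ≥ 1`,
`∑_{t=1}^T X_t^{1/2} ≤ (3/2)·(7·2^{2/3})^{1/2}·T^{2/3}`. -/
theorem stmt_6 (T : ℕ) (hT : 1 ≤ T) :
    ∑ t ∈ Finset.Icc 1 T, (X t) ^ ((1/2) : ℝ) ≤
      (3/2) * (7 * (2 : ℝ) ^ ((2/3) : ℝ)) ^ ((1/2) : ℝ) * (T : ℝ) ^ ((2/3) : ℝ) := by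
  have six_le : (6 : ℝ) ≤ 7 * 2 ^ ((2/3) : ℝ) := by
    linarith [one_le_rpow one_le_two (show (0 : ℝ) ≤ 2/3 by norm_num)]
  calc ∑ t ∈ Finset.Icc 1 T, (X t) ^ ((1/2) : ℝ)
      ≤ (3/2) * 6 ^ ((1/2) : ℝ) * (T : ℝ) ^ ((2/3) : ℝ) := by
        simp only [X_eq_harmonicDiscountedSum]
        convert stmt_6_general (p := 5/3) (q := 1/2) (by norm_num) (by norm_num) (by norm_num)
          (by norm_num) T using 3 <;> norm_num
    _ ≤ (3/2) * (7 * (2 : ℝ) ^ ((2/3) : ℝ)) ^ ((1/2) : ℝ) * (T : ℝ) ^ ((2/3) : ℝ) := by gcongr
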